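/- arXiv:math/0507289 — 4 statements merged into one kernel-verified Lean document; each statement's English description precedes it below -/
import Mathlib

section
/- Let (c_k) be Sylvester's sequence and n ≥ 2. Define m_i = c_{i+1} for 0 ≤ i ≤ n−1 and m_n = c_{n+1} − 2, and let m_{n+1} be any integer with c_{n+1} − 2 < m_{n+1} < n·(c_{n+1} − 1)(c_{n+1} − 2). Then the ramification indices m_0, …, m_{n+1} satisfy the numerical criterion 0 < ∑_{i=0}^{n+1} 1/m_i − 1 < (n+1)·min_{0≤i≤n+1} (1/m_i) (inequalities in ℚ). -/
/-- For Sylvester's sequence `c`, `n ≥ 2`, ramification indices `m i = c (i+1)` for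
`i < n`, `m n = c (n+1) - 2`, and any `m (n+1)` with
`c (n+1) - 2 < m (n+1) < n * (c (n+1) - 1) * (c (n+1) - 2)`, the numerical criterion
`0 < ∑_{i=0}^{n+1} 1/(m i) - 1 < (n+1) * min_i (1/(m i))` holds in `ℚ`. -/
theorem sylvester_new_criterion
    (c : ℕ → ℕ) (h1 : c 1 = 2)
    (hrec : ∀ k ≥ 1, c (k + 1) = c k ^ 2 - c k + 1)
    (n : ℕ) (hn : 2 ≤ n)
    (m : ℕ → ℕ)
    (hm1 : ∀ i < n, m i = c (i + 1))
    (hm2 : m n = c (n + 1) - 2)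
    (hlo : c (n + 1) - 2 < m (n + 1))
    (hhi : m (n + 1) < n * ((c (n + 1) - 1) * (c (n + 1) - 2))) :
    0 < (∑ i ∈ Finset.range (n + 2), (1 : ℚ) / (m i : ℚ)) - 1 ∧
    (∑ i ∈ Finset.range (n + 2), (1 : ℚ) / (m i : ℚ)) - 1
      < ((n : ℚ) + 1) *
        (Finset.range (n + 2)).inf' (Finset.nonempty_range_iff.mpr (by omega))
          (fun i => (1 : ℚ) / (m i : ℚ)) := by
  have hge : ∀ k, 2 ≤ c (k + 1) ∧ c (k + 2) + c (k + 1) = c (k + 1) * c (k + 1) + 1 := by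
    have step : ∀ k, 2 ≤ c (k + 1) → c (k + 2) + c (k + 1) = c (k + 1) * c (k + 1) + 1 := by
      intro k hk
      have h := hrec (k + 1) (by omega)
      have h' : c (k + 1) ≤ c (k + 1) ^ 2 := by nlinarith
      have h2 : c (k + 1) ^ 2 = c (k + 1) * c (k + 1) := by ring
      have h3 : c (k + 2) = c (k + 1 + 1) := rfl
      omega
    intro k
    induction k with
    | zero => exact ⟨by simp [h1], step 0 (by simp [h1])⟩
    | succ k ih =>
      obtain ⟨a, b⟩ := ih
      have h2 : 2 ≤ c (k + 1 + 1) := by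
        change 2 ≤ c (k + 2)
        nlinarith
      exact ⟨h2, step (k + 1) h2⟩
  have hmono : StrictMono (fun k => c (k + 1)) := by
    apply strictMono_nat_of_lt_succ
    intro k
    obtain ⟨a, b⟩ := hge k
    change c (k + 1) < c (k + 2)
    nlinarith
  have hsum : ∀ k, ∑ i ∈ Finset.range k, (1 : ℚ) / (c (i + 1) : ℚ)
      = 1 - 1 / ((c (k + 1) : ℚ) - 1) := by
    intro k
    induction k with
    | zero => norm_num [h1]
    | succ k ih =>
      rw [Finset.sum_range_succ, ih]
      obtain ⟨a, b⟩ := hge k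
      have a' : (2 : ℚ) ≤ c (k + 1) := by exact_mod_cast a
      have b' : (c (k + 2) : ℚ) + c (k + 1) = c (k + 1) * c (k + 1) + 1 := by exact_mod_cast b
      have e : (c (k + 1 + 1) : ℚ) - 1 = c (k + 1) * (c (k + 1) - 1) := by
        change (c (k + 2) : ℚ) - 1 = _
        linarith
      rw [e]
      have p : (c (k + 1) : ℚ) ≠ 0 := by linarith
      have q : (c (k + 1) : ℚ) - 1 ≠ 0 := by linarith
      field_simp
      ring
  have hgap : ∀ i < n, c (i + 1) + 2 ≤ c (n + 1) := by
    intro i hi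
    obtain ⟨j, rfl⟩ : ∃ j, n = j + 2 := ⟨n - 2, by omega⟩
    have h3 : c (i + 1) ≤ c (j + 1 + 1) := hmono.monotone (by omega : i ≤ j + 1)
    have h4 : c (j + 1) < c (j + 1 + 1) := hmono (by omega : j < j + 1)
    obtain ⟨a, -⟩ := hge j
    obtain ⟨-, b⟩ := hge (j + 1)
    have h5 : 3 ≤ c (j + 1 + 1) := by omega
    change _ ≤ c (j + 1 + 2)
    nlinarith
  have hC : 4 ≤ c (n + 1) := by
    have := hgap 0 (by omega)
    simp only [zero_add, h1] at this
    exact this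
  have hle : ∀ i ∈ Finset.range (n + 2), 0 < m i ∧ m i ≤ m (n + 1) := by
    intro i hi
    rw [Finset.mem_range] at hi
    rcases lt_trichotomy i n with h | h | h
    · have := hgap i h
      have := (hge i).1
      rw [hm1 i h]
      omega
    · subst h
      omega
    · obtain rfl : i = n + 1 := by omega
      omega
  have hMpos : (0 : ℚ) < m (n + 1) := by
    have : 0 < m (n + 1) := by omega
    exact_mod_cast this
  obtain ⟨D, hD⟩ : ∃ D, c (n + 1) = D + 2 := ⟨c (n + 1) - 2, by omega⟩
  have hDpos : (0 : ℚ) < D := by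
    have : 0 < D := by omega
    exact_mod_cast this
  have htot : (∑ i ∈ Finset.range (n + 2), (1 : ℚ) / (m i : ℚ)) - 1
      = 1 / (((D : ℚ) + 1) * D) + 1 / m (n + 1) := by
    rw [Finset.sum_range_succ, Finset.sum_range_succ,
      Finset.sum_congr rfl (fun i hi => by rw [hm1 i (Finset.mem_range.mp hi)]), hsum, hm2, hD]
    have e : (((D + 2 : ℕ) : ℚ) - 1) = D + 1 := by push_cast; ring
    have e2 : D + 2 - 2 = D := by omega
    rw [e, e2]
    field_simp
    ring
  rw [htot]
  refine ⟨by positivity, ?_⟩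
  obtain ⟨i, hi, he⟩ := Finset.exists_mem_eq_inf'
    (Finset.nonempty_range_iff.mpr (by omega : n + 2 ≠ 0)) (fun i => (1 : ℚ) / (m i : ℚ))
  rw [he]
  obtain ⟨hp, hl⟩ := hle i hi
  have hl' : (1 : ℚ) / m (n + 1) ≤ 1 / m i :=
    one_div_le_one_div_of_le (by exact_mod_cast hp) (by exact_mod_cast hl)
  have hhi' : (m (n + 1) : ℚ) < n * ((D + 1) * D) := by
    rw [hD] at hhi
    have e2 : D + 2 - 2 = D := by omega
    have e3 : D + 2 - 1 = D + 1 := by omega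
    rw [e2, e3] at hhi
    exact_mod_cast hhi
  have key : 1 / (((D : ℚ) + 1) * D) < n * (1 / m (n + 1)) := by
    rw [mul_one_div, div_lt_div_iff₀ (by positivity) hMpos]
    linarith
  calc 1 / (((D : ℚ) + 1) * D) + 1 / m (n + 1) < ((n : ℚ) + 1) * (1 / m (n + 1)) := by linarith
    _ ≤ _ := mul_le_mul_of_nonneg_left hl' (by positivity)
end

section
/- Let n ≥ 2 be an integer and λ ≥ 0 a real number. The function (u, v) ↦ |u^n + v^n|^{−2λ} is Lebesgue integrable on the open unit polydisc {(u,v) ∈ ℂ² : |u| < 1, |v| < 1} if and only if λ < 2/n. -/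
open MeasureTheory

/-- Integrability of a power of the norm on a ball. -/
lemma aux_norm_rpow {E : Type*} [NormedAddCommGroup E] [NormedSpace ℝ E] [MeasurableSpace E]
    [BorelSpace E] [FiniteDimensional ℝ E] [Nontrivial E] (μ : Measure E) [μ.IsAddHaarMeasure]
    (s r : ℝ) (hr : 0 < r) :
    IntegrableOn (fun x : E => ‖x‖ ^ (-s)) (Metric.ball 0 r) μ ↔
      s < (Module.finrank ℝ E : ℝ) := by
  have hd : 0 < Module.finrank ℝ E := Module.finrank_pos
  rw [integrableOn_fun_norm_addHaar μ (f := fun y : ℝ => y ^ (-s))]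
  have : ∀ y ∈ Set.Ioo (0:ℝ) r, y ^ (Module.finrank ℝ E - 1) • y ^ (-s)
      = y ^ ((Module.finrank ℝ E : ℝ) - 1 - s) := by
    intro y hy
    rw [smul_eq_mul, ← Real.rpow_natCast, ← Real.rpow_add hy.1]
    congr 1
    push_cast [Nat.cast_sub (show 1 ≤ Module.finrank ℝ E from hd)]
    ring
  rw [integrableOn_congr_fun this measurableSet_Ioo,
    intervalIntegral.integrableOn_Ioo_rpow_iff hr]
  constructor <;> intro h <;> linarith

/-- One-variable local integrability. -/
lemma aux_locInt (n : ℕ) (hn : 2 ≤ n) (s : ℝ) (hs0 : 0 ≤ s) (hs : s < 2) :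
    LocallyIntegrable (fun w : ℂ => ‖w ^ n + 1‖ ^ (-s)) volume := by
  have hmeas : Measurable (fun w : ℂ => ‖w ^ n + 1‖ ^ (-s)) := by fun_prop
  intro w0
  by_cases h0 : w0 ^ n + 1 = 0
  · have hw0 : w0 ≠ 0 := by
      rintro rfl
      simp [show n ≠ 0 by omega] at h0
    have hder : HasDerivAt (fun w : ℂ => w ^ n + 1) (n * w0 ^ (n - 1)) w0 := by
      simpa using (hasDerivAt_pow n w0).add_const 1
    have hne : (n : ℂ) * w0 ^ (n - 1) ≠ 0 := by
      have : (n : ℂ) ≠ 0 := by exact_mod_cast (show n ≠ 0 by omega)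
      positivity
    have hO := (HasDerivAtFilter.isTheta_sub hder hne).isBigO_symm
    have hO2 : (fun w : ℂ => w - w0) =O[nhds w0] (fun w : ℂ => w ^ n + 1) := by
      have := hO.comp_tendsto (k := fun w : ℂ => (w, w0)) (l' := nhds w0)
        (Filter.Tendsto.prodMk Filter.tendsto_id (by simp))
      simpa only [Function.comp_def, h0, sub_zero] using this
    obtain ⟨c, hc, hcb⟩ := hO2.exists_pos
    have hb := hcb.bound
    obtain ⟨r, hr, hball⟩ := Metric.eventually_nhds_iff_ball.1 hb
    refine ⟨Metric.ball w0 r, Metric.ball_mem_nhds _ hr, ?_⟩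
    have hi0 : IntegrableOn (fun x : ℂ => ‖x‖ ^ (-s)) (Metric.ball 0 r) volume :=
      (aux_norm_rpow volume s r hr).2 (by simpa using hs)
    have hi : IntegrableOn (fun x : ℂ => ‖x - w0‖ ^ (-s)) (Metric.ball w0 r) volume := by
      have := (measurePreserving_sub_right (volume : Measure ℂ) w0).integrableOn_comp_preimage
        (measurableEmbedding_subRight w0) (f := fun x : ℂ => ‖x‖ ^ (-s)) (s := Metric.ball 0 r)
      have h2 := this.2 hi0
      have h3 : (fun x => x - w0) ⁻¹' Metric.ball (0:ℂ) r = Metric.ball w0 r := by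
        ext x; simp [dist_eq_norm]
      rw [h3] at h2
      exact h2
    refine Integrable.mono' (hi.const_mul (c ^ s)) hmeas.aestronglyMeasurable ?_
    have hae : ∀ᵐ w ∂(volume.restrict (Metric.ball w0 r)), w ≠ w0 :=
      ae_restrict_of_ae (Measure.ae_ne volume w0)
    filter_upwards [hae, ae_restrict_mem measurableSet_ball] with w hw hwb
    have h1 := hball w hwb
    have hpos : 0 < ‖w - w0‖ := norm_pos_iff.2 (sub_ne_zero.2 hw)
    rw [Real.norm_of_nonneg (by positivity)]
    have h2 : c⁻¹ * ‖w - w0‖ ≤ ‖w ^ n + 1‖ := by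
      rw [inv_mul_le_iff₀ hc]; exact h1
    calc ‖w ^ n + 1‖ ^ (-s) ≤ (c⁻¹ * ‖w - w0‖) ^ (-s) :=
          Real.rpow_le_rpow_of_nonpos (by positivity) h2 (by linarith)
      _ = c ^ s * ‖w - w0‖ ^ (-s) := by
          rw [Real.mul_rpow (by positivity) (by positivity), Real.inv_rpow hc.le,
            Real.rpow_neg hc.le, inv_inv]
  · have hcont : ContinuousAt (fun w : ℂ => ‖w ^ n + 1‖ ^ (-s)) w0 := by
      apply ContinuousAt.rpow_const
      · fun_prop
      · left; simpa using h0
    exact (volume.finiteAt_nhds w0).integrableAtFilter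
      hmeas.stronglyMeasurable.stronglyMeasurableAtFilter
      (Filter.Tendsto.norm hcont).isBoundedUnder_le

lemma aux_scale (v : ℂ) (hv : v ≠ 0) (g : ℂ → ENNReal) (hg : Measurable g) :
    ∫⁻ u, g u = ENNReal.ofReal (‖v‖ ^ 2) * ∫⁻ w, g (v * w) := by
  have hdet : LinearMap.det (LinearMap.mul ℝ ℂ v) = ‖v‖ ^ 2 := by
    have := Algebra.norm_apply ℝ v
    rw [Algebra.norm_complex_apply, Complex.normSq_eq_norm_sq] at this
    exact this.symm
  have hpos : 0 < ‖v‖ ^ 2 := by positivity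
  have h := Measure.map_linearMap_addHaar_eq_smul_addHaar (volume : Measure ℂ)
    (f := LinearMap.mul ℝ ℂ v) (by rw [hdet]; exact hpos.ne')
  have h2 : ∫⁻ u, g u ∂(Measure.map (LinearMap.mul ℝ ℂ v) volume) = ∫⁻ w, g (v * w) := by
    rw [lintegral_map hg]
    · rfl
    · exact measurable_const_mul v
  rw [h, hdet, lintegral_smul_measure] at h2
  rw [← h2, smul_eq_mul, ← mul_assoc, ← ENNReal.ofReal_mul hpos.le,
    abs_of_pos (by positivity), mul_inv_cancel₀ hpos.ne']
  simp

lemma aux_half (n : ℕ) (hn : 2 ≤ n) (s : ℝ) (hs0 : 0 ≤ s) (hs : s < 2) (hs4 : n * s < 4) :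
    IntegrableOn (fun p : ℂ × ℂ => ‖p.1 ^ n + p.2 ^ n‖ ^ (-s))
      {p : ℂ × ℂ | ‖p.1‖ ≤ ‖p.2‖ ∧ ‖p.2‖ < 1} volume := by
  have hmeas : Measurable (fun p : ℂ × ℂ => ‖p.1 ^ n + p.2 ^ n‖ ^ (-s)) := by fun_prop
  have hset : MeasurableSet {p : ℂ × ℂ | ‖p.1‖ ≤ ‖p.2‖ ∧ ‖p.2‖ < 1} :=
    MeasurableSet.inter (s₁ := {p : ℂ × ℂ | ‖p.1‖ ≤ ‖p.2‖}) (s₂ := {p : ℂ × ℂ | ‖p.2‖ < 1})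
      (measurableSet_le (by fun_prop) (by fun_prop))
      (measurableSet_lt (by fun_prop) (by fun_prop))
  have hI1 : IntegrableOn (fun w : ℂ => ‖w ^ n + 1‖ ^ (-s)) (Metric.closedBall 0 1) volume :=
    (aux_locInt n hn s hs0 hs).integrableOn_isCompact (isCompact_closedBall _ _)
  have hI2 : IntegrableOn (fun v : ℂ => ‖v‖ ^ (-(n * s - 2))) (Metric.ball 0 1) volume :=
    (aux_norm_rpow volume _ 1 one_pos).2 (by simp; linarith)
  refine ⟨hmeas.aestronglyMeasurable, ?_⟩
  rw [hasFiniteIntegral_iff_enorm, ← lintegral_indicator hset, Measure.volume_eq_prod,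
    lintegral_prod_symm' _ ((hmeas.enorm).indicator hset)]
  have key : ∀ v : ℂ, v ≠ 0 →
      ∫⁻ u, {p : ℂ × ℂ | ‖p.1‖ ≤ ‖p.2‖ ∧ ‖p.2‖ < 1}.indicator
        (fun p => ‖‖p.1 ^ n + p.2 ^ n‖ ^ (-s)‖ₑ) (u, v)
      = (Metric.ball (0:ℂ) 1).indicator (fun v : ℂ => ‖‖v‖ ^ (-(n * s - 2))‖ₑ) v *
        ∫⁻ w in Metric.closedBall (0:ℂ) 1, ‖‖w ^ n + 1‖ ^ (-s)‖ₑ := by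
    intro v hv
    have hvp : 0 < ‖v‖ := norm_pos_iff.2 hv
    have hmv : Measurable (fun u : ℂ => {p : ℂ × ℂ | ‖p.1‖ ≤ ‖p.2‖ ∧ ‖p.2‖ < 1}.indicator
        (fun p => ‖‖p.1 ^ n + p.2 ^ n‖ ^ (-s)‖ₑ) (u, v)) :=
      ((hmeas.enorm).indicator hset).comp measurable_prodMk_right
    rw [aux_scale v hv _ hmv,
      ← lintegral_indicator measurableSet_closedBall,
      ← lintegral_const_mul _ (Measurable.indicator (by fun_prop) measurableSet_closedBall),
      ← lintegral_const_mul _ ?_]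
    · congr 1
      ext w
      by_cases hv1 : ‖v‖ < 1
      · by_cases hw : ‖w‖ ≤ 1
        · have e1 : ‖v * w‖ ≤ ‖v‖ := by
            rw [norm_mul]; nlinarith [norm_nonneg v]
          rw [Set.indicator_of_mem (show (v * w, v) ∈ {p : ℂ × ℂ | ‖p.1‖ ≤ ‖p.2‖ ∧ ‖p.2‖ < 1} from
              ⟨e1, hv1⟩), Set.indicator_of_mem (show v ∈ Metric.ball (0:ℂ) 1 by simpa using hv1),
            Set.indicator_of_mem (show w ∈ Metric.closedBall (0:ℂ) 1 by simpa using hw)]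
          rw [Real.enorm_of_nonneg (by positivity), Real.enorm_of_nonneg (by positivity),
            Real.enorm_of_nonneg (by positivity), ← ENNReal.ofReal_mul (by positivity),
            ← ENNReal.ofReal_mul (by positivity)]
          congr 1
          have e2 : (v * w) ^ n + v ^ n = v ^ n * (w ^ n + 1) := by ring
          dsimp only
          rw [e2, norm_mul, Real.mul_rpow (by positivity) (by positivity), ← mul_assoc, norm_pow,
            ← Real.rpow_natCast, ← Real.rpow_natCast, ← Real.rpow_mul hvp.le,
            ← Real.rpow_add hvp]
          congr 2
          push_cast
          ring
        · have hnw : ¬ (‖v * w‖ ≤ ‖v‖ ∧ ‖v‖ < 1) := by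
            rintro ⟨h, -⟩
            rw [norm_mul] at h
            push Not at hw
            nlinarith
          rw [Set.indicator_of_notMem (by exact hnw),
            Set.indicator_of_notMem (show w ∉ Metric.closedBall (0:ℂ) 1 by simpa using hw)]
          simp
      · rw [Set.indicator_of_notMem (fun h => hv1 h.2),
          Set.indicator_of_notMem (show v ∉ Metric.ball (0:ℂ) 1 by simpa using hv1)]
        simp
    · exact ((hmeas.enorm).indicator hset).comp
        ((measurable_const_mul v).prodMk measurable_const)
  rw [lintegral_congr_ae ((Measure.ae_ne volume (0:ℂ)).mono key),
    lintegral_mul_const _ (Measurable.indicator (by fun_prop) measurableSet_ball),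
    lintegral_indicator measurableSet_ball]
  exact ENNReal.mul_lt_top hI2.2 hI1.2

lemma aux_ae (n : ℕ) (hn : 2 ≤ n) : ∀ᵐ p : ℂ × ℂ, p.1 ^ n + p.2 ^ n ≠ 0 := by
  have hset : MeasurableSet {p : ℂ × ℂ | p.1 ^ n + p.2 ^ n = 0} :=
    measurableSet_eq_fun (by fun_prop) (by fun_prop)
  rw [ae_iff]
  simp only [ne_eq, not_not]
  rw [Measure.volume_eq_prod, Measure.measure_prod_null hset]
  filter_upwards with u
  apply Set.Finite.measure_zero
  have hp : (Polynomial.X ^ n + Polynomial.C (u ^ n) : Polynomial ℂ) ≠ 0 :=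
    Polynomial.X_pow_add_C_ne_zero (by omega) _
  refine (Polynomial.finite_setOfPred_isRoot hp).subset ?_
  intro v hv
  simp only [Set.mem_preimage, Set.mem_ofPred_eq] at hv
  simp [Polynomial.IsRoot, add_comm, hv]

/-- For `n ≥ 2` and `λ ≥ 0`, the function `(u,v) ↦ |u^n + v^n| ^ (-2λ)` is Lebesgue
integrable on the open unit polydisc in `ℂ²` if and only if `λ < 2/n`. -/
theorem integrable_un_add_vn_iff
    (n : ℕ) (hn : 2 ≤ n) (lam : ℝ) (hlam : 0 ≤ lam) :
    IntegrableOn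
      (fun p : ℂ × ℂ => ‖p.1 ^ n + p.2 ^ n‖ ^ (-(2 * lam)))
      {p : ℂ × ℂ | ‖p.1‖ < 1 ∧ ‖p.2‖ < 1} volume ↔
    lam < 2 / (n : ℝ) := by
  have hn2 : (2:ℝ) ≤ n := by exact_mod_cast hn
  have hn0 : (0:ℝ) < n := by linarith
  constructor
  · intro h
    have hball : {p : ℂ × ℂ | ‖p.1‖ < 1 ∧ ‖p.2‖ < 1} = Metric.ball 0 1 := by
      ext p; simp [Prod.norm_def]
    rw [hball] at h
    have h4 : IntegrableOn (fun p : ℂ × ℂ => ‖p‖ ^ (-(n * (2 * lam)))) (Metric.ball 0 1) volume := by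
      refine Integrable.mono' (h.const_mul (2 ^ (2 * lam)))
        (Measurable.aestronglyMeasurable (by fun_prop)) ?_
      filter_upwards [ae_restrict_of_ae (aux_ae n hn)] with p hp
      rw [Real.norm_of_nonneg (by positivity)]
      have hpos : 0 < ‖p.1 ^ n + p.2 ^ n‖ := norm_pos_iff.2 hp
      have hle : ‖p.1 ^ n + p.2 ^ n‖ ≤ 2 * ‖p‖ ^ n := by
        have h1 : ‖p.1‖ ^ n ≤ ‖p‖ ^ n := by gcongr; exact norm_fst_le p
        have h2 : ‖p.2‖ ^ n ≤ ‖p‖ ^ n := by gcongr; exact norm_snd_le p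
        have h3 := norm_add_le (p.1 ^ n) (p.2 ^ n)
        rw [norm_pow, norm_pow] at h3
        linarith
      have := Real.rpow_le_rpow_of_nonpos hpos hle (show -(2 * lam) ≤ 0 by linarith)
      rw [Real.mul_rpow (by positivity) (by positivity), ← Real.rpow_natCast,
        ← Real.rpow_mul (norm_nonneg p), Real.rpow_neg (by norm_num : (0:ℝ) ≤ 2),
        inv_mul_le_iff₀ (by positivity), mul_neg] at this
      exact this
    have hH : (volume : Measure (ℂ × ℂ)).IsAddHaarMeasure :=
      inferInstanceAs ((volume : Measure ℂ).prod (volume : Measure ℂ)).IsAddHaarMeasure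
    have h5 := (aux_norm_rpow volume _ 1 one_pos).1 h4
    simp at h5
    rw [lt_div_iff₀ hn0]
    linarith
  · intro h
    rw [lt_div_iff₀ hn0] at h
    have hA := aux_half n hn (2 * lam) (by linarith) (by nlinarith) (by linarith)
    have hB : IntegrableOn (fun p : ℂ × ℂ => ‖p.1 ^ n + p.2 ^ n‖ ^ (-(2 * lam)))
        {p : ℂ × ℂ | ‖p.2‖ ≤ ‖p.1‖ ∧ ‖p.1‖ < 1} volume := by
      have := ((Measure.measurePreserving_swap (μ := (volume : Measure ℂ))
        (ν := (volume : Measure ℂ))).integrableOn_comp_preimage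
        MeasurableEquiv.prodComm.measurableEmbedding).2 hA
      simpa [Function.comp_def, add_comm, Measure.volume_eq_prod] using this
    refine (hA.union hB).mono_set ?_
    rintro p ⟨h1, h2⟩
    rcases le_total ‖p.1‖ ‖p.2‖ with h3 | h3
    · exact Or.inl ⟨h3, h2⟩
    · exact Or.inr ⟨h3, h1⟩
end

section
/- Let n ≥ 1, let r_1, …, r_n and ρ_1, …, ρ_n be positive reals, and let m_1, m_2 be positive integers with m_2 ∣ m_1. Set P_1 = {z ∈ ℂⁿ : |z_1| < r_1, …, |z_n| < r_n}, P_2 = {z : |z_1| < ρ_1, …, |z_n| < ρ_n}, Q_1 = {z : |z_1| < r_1^{m_1}, |z_i| < r_i for i ≥ 2}, Q_2 = {z : |z_1| < ρ_1^{m_2}, |z_i| < ρ_i for i ≥ 2}, and define π_1 : P_1 → Q_1, π_1(z) = (z_1^{m_1}, z_2, …, z_n) and π_2 : P_2 → Q_2, π_2(z) = (z_1^{m_2}, z_2, …, z_n). Let Q_1* = {z ∈ Q_1 : z_1 ≠ 0} and Q_2* = {z ∈ Q_2 : z_1 ≠ 0}. If f : Q_1 → Q_2 is holomorphic (complex differentiable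 on the open set Q_1) with f(Q_1*) ⊆ Q_2*, then the set of holomorphic maps f̃ : P_1 → P_2 satisfying π_2 ∘ f̃ = f ∘ π_1 on P_1 has exactly m_2 elements. -/
open Set Filter Topology Metric MeasureTheory

theorem root_const {X : Type*} [TopologicalSpace X] {U : Set X} (hU : IsPreconnected U)
    (hne : U.Nonempty) {u v : X → ℂ} (hu : ContinuousOn u U) (hv : ContinuousOn v U)
    (hv0 : ∀ x ∈ U, v x ≠ 0) {m : ℕ} (hm : 0 < m) (h : ∀ x ∈ U, u x ^ m = v x ^ m) :
    ∃ c : ℂ, c ^ m = 1 ∧ ∀ x ∈ U, u x = c * v x := by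
  obtain ⟨x0, hx0⟩ := hne
  have hfin : {c : ℂ | c ^ m = 1}.Finite := by
    have := (Polynomial.nthRootsFinset m (1 : ℂ)).finite_toSet
    refine this.subset fun c hc => ?_
    simpa [Polynomial.mem_nthRootsFinset hm] using hc
  have hmaps : MapsTo (fun x => u x / v x) U {c : ℂ | c ^ m = 1} := by
    intro x hx
    have := hv0 x hx
    simp [div_pow, h x hx, this]
  refine ⟨u x0 / v x0, hmaps hx0, fun x hx => ?_⟩
  have := hU.constant_of_mapsTo hfin.isDiscrete (hu.div hv hv0) hmaps hx hx0
  have h2 := hv0 x hx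
  simp only [Pi.div_apply] at this
  rw [← this]
  field_simp

theorem root_diff {E : Type*} [NormedAddCommGroup E] [NormedSpace ℂ E] {G F : E → ℂ} {z : E}
    {m : ℕ} (hm : 0 < m) (hG : ContinuousAt G z) (hF : DifferentiableAt ℂ F z) (h0 : F z ≠ 0)
    (h : ∀ᶠ x in 𝓝 z, G x ^ m = F x) : DifferentiableAt ℂ G z := by
  have hz := h.self_of_nhds
  have hG0 : G z ≠ 0 := by
    intro h1; rw [h1, zero_pow hm.ne'] at hz; exact h0 hz.symm
  have hd : DifferentiableAt ℂ (fun x => G z * (F x / F z) ^ ((m : ℂ)⁻¹)) z := by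
    refine (DifferentiableAt.cpow_const (f := fun x => F x / F z) (by fun_prop) ?_).const_mul _
    simp [h0]
  refine hd.congr_of_eventuallyEq ?_
  have hq : ContinuousAt (fun x => G x / G z) z := hG.div_const _
  have harg : Tendsto (fun x => (G x / G z).arg) (𝓝 z) (𝓝 0) := by
    have h1 : ContinuousAt Complex.arg (G z / G z) := Complex.continuousAt_arg (by simp [hG0])
    have := ContinuousAt.comp (f := fun x => G x / G z) h1 hq
    simpa [ContinuousAt, hG0, Function.comp_def] using this
  have hp : 0 < Real.pi / m := by positivity
  filter_upwards [h, harg.eventually (Ioo_mem_nhds (neg_lt_zero.mpr hp) hp)] with x hx hx2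
  rw [← hx, ← hz, ← div_pow, Complex.pow_cpow_nat_inv hm.ne' hx2.1 hx2.2.le]
  field_simp

theorem param_diff {E : Type*} [NormedAddCommGroup E] [NormedSpace ℂ E] [FiniteDimensional ℂ E]
    {U : Set E} (hU : IsOpen U) {W : ℂ × E → ℂ} {R M : ℝ} (hR : 0 ≤ R)
    (hW : ∀ ζ ∈ sphere (0:ℂ) R, ∀ x ∈ U, DifferentiableAt ℂ W (ζ, x))
    (hM : ∀ ζ ∈ sphere (0:ℂ) R, ∀ x ∈ U, ‖W (ζ, x)‖ ≤ M) :
    ∀ x ∈ U, DifferentiableAt ℂ (fun x => ∮ ζ in C(0, R), W (ζ, x)) x := by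
  intro x₀ hx₀
  obtain ⟨δ, hδ, hball⟩ := Metric.isOpen_iff.1 hU x₀ hx₀
  borelize E
  have : ProperSpace E := FiniteDimensional.proper ℂ E
  have hcs : ∀ θ, circleMap 0 R θ ∈ sphere (0:ℂ) R := fun θ => circleMap_mem_sphere _ hR θ
  have hslice : ∀ ζ ∈ sphere (0:ℂ) R, ∀ x ∈ U, HasFDerivAt (fun y => W (ζ, y))
      ((fderiv ℂ W (ζ, x)).comp (ContinuousLinearMap.inr ℂ ℂ E)) x := fun ζ hζ x hx =>
    (hW ζ hζ x hx).hasFDerivAt.comp x (hasFDerivAt_prodMk_right ζ x)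
  have hcont : ∀ x ∈ U, Continuous (fun θ => W (circleMap 0 R θ, x)) := by
    intro x hx
    rw [continuous_iff_continuousAt]
    intro θ
    exact ContinuousAt.comp (f := fun θ => (circleMap 0 R θ, x)) (hW _ (hcs θ) x hx).continuousAt
      (by fun_prop)
  have hcont2 : ∀ x ∈ U, Continuous
      (fun θ => deriv (circleMap 0 R) θ • W (circleMap 0 R θ, x)) := by
    intro x hx
    have := hcont x hx
    simp only [deriv_circleMap]
    exact ((continuous_circleMap 0 R).mul continuous_const).smul this
  have key := hasFDerivAt_integral_of_dominated_loc_of_lip' (𝕜 := ℂ)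
    (μ := volume.restrict (Ioc 0 (2 * Real.pi)))
    (F := fun x θ => deriv (circleMap 0 R) θ • W (circleMap 0 R θ, x)) (x₀ := x₀)
    (s := ball x₀ δ) (bound := fun _ => R * (2 * M / δ))
    (F' := fun θ => deriv (circleMap 0 R) θ • ((fderiv ℂ W (circleMap 0 R θ, x₀)).comp
      (ContinuousLinearMap.inr ℂ ℂ E)))
    (ball_mem_nhds _ hδ) (fun x hx => (hcont2 x (hball hx)).aestronglyMeasurable) 
    ?_ ?_ ?_ (integrable_const _) ?_
  · have := key.2.differentiableAt
    simpa only [circleIntegral, intervalIntegral.integral_of_le Real.two_pi_pos.le] using this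
  · exact ((hcont2 x₀ hx₀).intervalIntegrable 0 (2 * Real.pi)).1
  · have h1 : Measurable (fun θ => fderiv ℂ W (circleMap 0 R θ, x₀)) :=
      (measurable_fderiv ℂ W).comp (by fun_prop : Continuous fun θ => (circleMap 0 R θ, x₀)).measurable
    have h2 : AEStronglyMeasurable (fun θ => fderiv ℂ W (circleMap 0 R θ, x₀))
      (volume.restrict (Ioc 0 (2 * Real.pi))) := h1.aestronglyMeasurable
    refine AEStronglyMeasurable.fun_smul ?_ ?_
    · have h3 : Continuous (deriv (circleMap 0 R)) := by
        have : deriv (circleMap 0 R) = fun θ => circleMap 0 R θ * Complex.I := by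
          ext θ; simp
        rw [this]
        exact (continuous_circleMap 0 R).mul continuous_const
      exact h3.aestronglyMeasurable
    · exact (((ContinuousLinearMap.compL ℂ E (ℂ × E) ℂ).flip
        (ContinuousLinearMap.inr ℂ ℂ E)).continuous).comp_aestronglyMeasurable h2
  · refine Eventually.of_forall fun θ x hx => ?_
    have h1 := Complex.dist_le_div_mul_dist_of_mapsTo_ball (f := fun y => W (circleMap 0 R θ, y))
      (c := x₀) (R₁ := δ) (R₂ := 2 * M) (z := x)
      (fun y hy => (hslice _ (hcs θ) y (hball hy)).differentiableAt.differentiableWithinAt)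
      (fun y hy => by
        rw [mem_closedBall, dist_eq_norm]
        have a1 := hM _ (hcs θ) y (hball hy)
        have a2 := hM _ (hcs θ) x₀ hx₀
        exact (norm_sub_le _ _).trans (by linarith)) hx
    rw [← smul_sub, norm_smul, deriv_circleMap]
    rw [dist_eq_norm, dist_eq_norm] at h1
    have : ‖circleMap 0 R θ * Complex.I‖ = R := by simp [abs_of_nonneg hR]
    rw [this, mul_assoc]
    exact mul_le_mul_of_nonneg_left h1 hR
  · refine Eventually.of_forall fun θ => ?_
    exact (hslice _ (hcs θ) x₀ hx₀).fun_const_smul _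

theorem isOpen_polydisc {n : ℕ} (r : Fin n → ℝ) : IsOpen {z : Fin n → ℂ | ∀ i, ‖z i‖ < r i} := by
  simp only [ofPred_forall]
  exact isOpen_iInter_of_finite fun i => isOpen_lt (by fun_prop) continuous_const

theorem differentiable_update {n : ℕ} (k : Fin n) :
    Differentiable ℂ (fun p : ℂ × (Fin n → ℂ) => Function.update p.2 k p.1) := by
  rw [differentiable_pi]
  intro i
  by_cases h : i = k
  · subst h; simp only [Function.update_self]; fun_prop
  · simp [Function.update_of_ne h]; fun_prop

theorem remov {n : ℕ} (k : Fin n) (r : Fin n → ℝ) (hr : ∀ i, 0 < r i) (G : (Fin n → ℂ) → ℂ) (M : ℝ)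
    (hG : ∀ z : Fin n → ℂ, (∀ i, ‖z i‖ < r i) → z k ≠ 0 → DifferentiableAt ℂ G z)
    (hM : ∀ z : Fin n → ℂ, (∀ i, ‖z i‖ < r i) → z k ≠ 0 → ‖G z‖ ≤ M) :
    ∃ g : (Fin n → ℂ) → ℂ, (∀ z : Fin n → ℂ, (∀ i, ‖z i‖ < r i) → DifferentiableAt ℂ g z) ∧
      ∀ z, z k ≠ 0 → g z = G z := by
  have hupd : ∀ (x : Fin n → ℂ) (t : ℂ), (∀ i, ‖x i‖ < r i) → ‖t‖ < r k →
      ∀ i, ‖Function.update x k t i‖ < r i := by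
    intro x t hx ht i
    by_cases h : i = k
    · subst h; simpa using ht
    · simpa [Function.update_of_ne h] using hx i
  set s : (Fin n → ℂ) → ℂ → ℂ := fun x => Function.update (fun t => G (Function.update x k t)) 0
    (limUnder (𝓝[≠] 0) (fun t => G (Function.update x k t))) with hs
  have hgG : ∀ z : Fin n → ℂ, z k ≠ 0 → s z (z k) = G z := by
    intro z hz
    simp [hs, Function.update_of_ne hz]
  have hslice : ∀ x : Fin n → ℂ, (∀ i, ‖x i‖ < r i) → DifferentiableOn ℂ (s x) (ball 0 (r k)) := by
    intro x hx
    refine Complex.differentiableOn_update_limUnder_of_bddAbove (ball_mem_nhds _ (hr k)) ?_ ?_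
    · intro t ht
      have h1 := hG (Function.update x k t) (hupd x t hx (by simpa using ht.1)) (by simpa using ht.2)
      exact (DifferentiableAt.comp t h1 (hasFDerivAt_update x t).differentiableAt).differentiableWithinAt
    · refine ⟨M, ?_⟩
      rintro _ ⟨t, ht, rfl⟩
      exact hM _ (hupd x t hx (by simpa using ht.1)) (by simpa using ht.2)
  refine ⟨fun z => s z (z k), fun z hz => ?_, hgG⟩
  by_cases hzk : z k = 0
  · set R := r k / 2 with hR
    have hR0 : 0 < R := half_pos (hr k)
    have hRr : R < r k := half_lt_self (hr k)
    set U : Set (Fin n → ℂ) := {x | ∀ i, ‖x i‖ < r i} ∩ {x | ‖x k‖ < R / 2} with hU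
    have hUo : IsOpen U := (isOpen_polydisc r).inter (isOpen_lt (by fun_prop) continuous_const)
    have hzU : z ∈ U := ⟨hz, by simp [hzk, hR0]⟩
    set W : ℂ × (Fin n → ℂ) → ℂ := fun p => (p.1 - p.2 k)⁻¹ • G (Function.update p.2 k p.1) with hW
    have hdist : ∀ ζ ∈ sphere (0:ℂ) R, ∀ x ∈ U, R / 2 ≤ ‖ζ - x k‖ := by
      intro ζ hζ x hx
      have h1 : ‖ζ‖ = R := by simpa using hζ
      have h2 : ‖x k‖ < R / 2 := hx.2
      have := norm_sub_norm_le ζ (x k)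
      linarith
    have hζ0 : ∀ ζ ∈ sphere (0:ℂ) R, ζ ≠ 0 ∧ ‖ζ‖ < r k := by
      intro ζ hζ
      have h1 : ‖ζ‖ = R := by simpa using hζ
      exact ⟨by rw [← norm_pos_iff, h1]; exact hR0, by rw [h1]; exact hRr⟩
    have hd := param_diff hUo (W := W) (R := R) (M := (R / 2)⁻¹ * M) hR0.le ?_ ?_ z hzU
    · have hd2 : DifferentiableAt ℂ (fun x => (2 * Real.pi * Complex.I : ℂ)⁻¹ •
          ∮ ζ in C(0, R), W (ζ, x)) z := hd.fun_const_smul _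
      refine hd2.congr_of_eventuallyEq ?_
      filter_upwards [hUo.mem_nhds hzU] with x hx
      have hxk : x k ∈ ball (0:ℂ) R := by
        have : ‖x k‖ < R / 2 := hx.2
        simp; linarith
      have hc := DifferentiableOn.circleIntegral_sub_inv_smul ((hslice x hx.1).mono
        (closedBall_subset_ball hRr)) hxk
      have : (∮ ζ in C(0, R), W (ζ, x)) = ∮ ζ in C(0, R), (ζ - x k)⁻¹ • s x ζ := by
        refine circleIntegral.integral_congr hR0.le fun ζ hζ => ?_
        simp [hW, hs, Function.update_of_ne (hζ0 ζ hζ).1]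
      rw [this, hc, smul_smul, inv_mul_cancel₀ Complex.two_pi_I_ne_zero, one_smul]
    · intro ζ hζ x hx
      have h1 := hG (Function.update x k ζ) (hupd x ζ hx.1 (hζ0 ζ hζ).2) (by simpa using (hζ0 ζ hζ).1)
      have h2 : ζ - x k ≠ 0 := by
        have := hdist ζ hζ x hx
        rw [← norm_pos_iff]; linarith
      refine DifferentiableAt.fun_smul (DifferentiableAt.fun_inv (h := fun p : ℂ × (Fin n → ℂ) => p.1 - p.2 k) (z := (ζ, x)) ?_ h2) ?_
      · fun_prop
      · exact DifferentiableAt.comp (g := G) (ζ, x) h1 (differentiable_update k _)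
    · intro ζ hζ x hx
      rw [hW, norm_smul, norm_inv]
      have := hdist ζ hζ x hx
      gcongr
      · exact hM _ (hupd x ζ hx.1 (hζ0 ζ hζ).2) (by simpa using (hζ0 ζ hζ).1)
  · refine (hG z hz hzk).congr_of_eventuallyEq ?_
    have : ∀ᶠ x : Fin n → ℂ in 𝓝 z, x k ≠ 0 := 
      (continuous_apply k).continuousAt.eventually_ne hzk
    filter_upwards [this] with x hx using hgG x hx

/-- The tube over the punctured polydisc. -/
def tube {n : ℕ} (k : Fin n) (r : Fin n → ℝ) : Set (Fin n → ℂ) :=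
  {w | (w k).re < Real.log (r k) ∧ ∀ i, i ≠ k → ‖w i‖ < r i}

/-- The punctured polydisc. -/
def pstar {n : ℕ} (k : Fin n) (r : Fin n → ℝ) : Set (Fin n → ℂ) :=
  {w | (∀ i, ‖w i‖ < r i) ∧ w k ≠ 0}

theorem tube_eq {n : ℕ} (k : Fin n) (r : Fin n → ℝ) : tube k r =
    (LinearMap.proj (R := ℝ) (φ := fun _ : Fin n => ℂ) k) ⁻¹' {z | z.re < Real.log (r k)} ∩
    ⋂ (i) (_ : i ≠ k), (LinearMap.proj (R := ℝ) (φ := fun _ : Fin n => ℂ) i) ⁻¹' (ball 0 (r i)) := by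
  ext w
  simp [tube]

theorem tube_convex {n : ℕ} (k : Fin n) (r : Fin n → ℝ) : Convex ℝ (tube k r) := by
  rw [tube_eq]
  exact ((convex_halfSpace_re_lt _).linear_preimage _).inter
    (convex_iInter₂ fun i _ => (convex_ball 0 (r i)).linear_preimage _)

theorem tube_open {n : ℕ} (k : Fin n) (r : Fin n → ℝ) : IsOpen (tube k r) := by
  have : tube k r = {w | (w k).re < Real.log (r k)} ∩ ⋂ (i) (_ : i ≠ k), {w | ‖w i‖ < r i} := by
    ext w
    simp [tube]
  rw [this]
  refine IsOpen.inter (isOpen_lt (by fun_prop) continuous_const) ?_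
  exact isOpen_iInter_of_finite fun i => isOpen_iInter_of_finite fun _ =>
    isOpen_lt (by fun_prop) continuous_const

theorem tube_nonempty {n : ℕ} (k : Fin n) (r : Fin n → ℝ) (hr : ∀ i, 0 < r i) :
    (tube k r).Nonempty := by
  refine ⟨Function.update 0 k ((Real.log (r k) - 1 : ℝ) : ℂ), ?_, ?_⟩
  · simp
  · intro i hi
    simp [Function.update_of_ne hi, hr i]

theorem tube_sc {n : ℕ} (k : Fin n) (r : Fin n → ℝ) (hr : ∀ i, 0 < r i) :
    IsSimplyConnected (tube k r) := by
  have := (tube_convex k r).contractibleSpace (tube_nonempty k r hr)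
  exact SimplyConnectedSpace.ofContractible _

theorem tube_exp {n : ℕ} (k : Fin n) (r : Fin n → ℝ) (hr : ∀ i, 0 < r i) {w : Fin n → ℂ} 
    (hw : w ∈ tube k r) : Function.update w k (Complex.exp (w k)) ∈ pstar k r := by
  refine ⟨fun i => ?_, by simp [Complex.exp_ne_zero]⟩
  by_cases h : i = k
  · subst h
    simpa [Complex.norm_exp] using (Real.lt_log_iff_exp_lt (hr i)).1 hw.1
  · simpa [Function.update_of_ne h] using hw.2 i h

theorem tube_of_exp {n : ℕ} (k : Fin n) (r : Fin n → ℝ) (hr : ∀ i, 0 < r i) {z : Fin n → ℂ} 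
    (hz : z ∈ pstar k r) {t : ℂ} (ht : Complex.exp t = z k) : 
    Function.update z k t ∈ tube k r := by
  refine ⟨?_, fun i h => by simpa [Function.update_of_ne h] using hz.1 i⟩
  have := hz.1 k
  rw [← ht, Complex.norm_exp] at this
  simpa using (Real.lt_log_iff_exp_lt (hr k)).2 this

theorem continuous_expmap {n : ℕ} (k : Fin n) :
    Continuous (fun w : Fin n → ℂ => Function.update w k (Complex.exp (w k))) := by
  fun_prop

theorem pstar_preconn {n : ℕ} (k : Fin n) (r : Fin n → ℝ) (hr : ∀ i, 0 < r i) :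
    IsPreconnected (pstar k r) := by
  have : pstar k r = (fun w => Function.update w k (Complex.exp (w k))) '' tube k r := by
    ext z
    constructor
    · intro hz
      have h := Complex.exp_log hz.2
      exact ⟨_, tube_of_exp k r hr hz h, by simp [h]⟩
    · rintro ⟨w, hw, rfl⟩
      exact tube_exp k r hr hw
  rw [this]
  exact (tube_convex k r).isPreconnected.image _ (continuous_expmap k).continuousOn

theorem pstar_open {n : ℕ} (k : Fin n) (r : Fin n → ℝ) : IsOpen (pstar k r) := by
  have : pstar k r = {z | ∀ i, ‖z i‖ < r i} ∩ {z | z k ≠ 0} := rfl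
  rw [this]
  exact (isOpen_polydisc r).inter (isOpen_ne_fun (by fun_prop) continuous_const)

theorem pstar_dense {n : ℕ} (k : Fin n) (r : Fin n → ℝ) :
    {z : Fin n → ℂ | ∀ i, ‖z i‖ < r i} ⊆ closure (pstar k r) := by
  intro z hz
  have h1 : Dense {z : Fin n → ℂ | z k ≠ 0} := by
    have : {z : Fin n → ℂ | z k ≠ 0} = (fun z => z k) ⁻¹' ({0}ᶜ : Set ℂ) := rfl
    rw [this]
    exact (dense_compl_singleton (0:ℂ)).preimage (isOpenMap_eval k)
  exact h1.open_subset_closure_inter (isOpen_polydisc r) hz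

theorem exists_root {n : ℕ} (k : Fin n) (r : Fin n → ℝ) (hr : ∀ i, 0 < r i) (F : (Fin n → ℂ) → ℂ)
    (m m₁ : ℕ) (hm : 0 < m) (hm₁ : 0 < m₁) (hd : m ∣ m₁) (hF : ContinuousOn F (pstar k r))
    (hF0 : ∀ z ∈ pstar k r, F z ≠ 0)
    (hinv : ∀ z, ∀ t : ℂ, t ^ m₁ = z k ^ m₁ → F (Function.update z k t) = F z) :
    ∃ G : (Fin n → ℂ) → ℂ, ContinuousOn G (pstar k r) ∧ ∀ z ∈ pstar k r, G z ^ m = F z := by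
  obtain ⟨ψ, hψc, hψ⟩ := Complex.exists_continuousOn_pow_eq (tube_sc k r hr) (tube_open k r)
    (g := fun w => F (Function.update w k (Complex.exp (w k))))
    (hF.comp (continuous_expmap k).continuousOn fun w hw => tube_exp k r hr hw)
    (by rintro ⟨w, hw, h0⟩; exact hF0 _ (tube_exp k r hr hw) h0) hm.ne'
  set τ : ℂ := 2 * Real.pi * Complex.I / m₁ with hτ
  have hm₁0 : (m₁ : ℂ) ≠ 0 := by exact_mod_cast hm₁.ne'
  have hτre : τ.re = 0 := by simp [hτ, Complex.div_natCast_re]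
  have hshift : ∀ w ∈ tube k r, Function.update w k (w k + τ) ∈ tube k r := by
    intro w hw
    exact ⟨by simpa [hτre] using hw.1, fun i hi => by simpa [Function.update_of_ne hi] using hw.2 i hi⟩
  have hψ0 : ∀ w ∈ tube k r, ψ w ≠ 0 := by
    intro w hw h
    have := hψ w
    rw [h, zero_pow hm.ne'] at this
    exact hF0 _ (tube_exp k r hr hw) this.symm
  have hcontS : Continuous fun w : Fin n → ℂ => Function.update w k (w k + τ) := by fun_prop
  obtain ⟨c, hc, hcψ⟩ := root_const (tube_convex k r).isPreconnected (tube_nonempty k r hr)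
    (u := fun w => ψ (Function.update w k (w k + τ))) (v := ψ)
    (hψc.comp hcontS.continuousOn hshift) hψc hψ0 hm (by
      intro w hw
      rw [hψ, hψ]
      have := hinv (Function.update w k (Complex.exp (w k))) (Complex.exp (w k + τ)) (by
        rw [Function.update_self, ← Complex.exp_nat_mul, ← Complex.exp_nat_mul]
        rw [mul_add, hτ, mul_div_cancel₀ _ hm₁0, Complex.exp_add, Complex.exp_two_pi_mul_I, mul_one])
      simpa using this)
  have hiter : ∀ (j : ℕ), ∀ w ∈ tube k r, Function.update w k (w k + j * τ) ∈ tube k r ∧ 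
      ψ (Function.update w k (w k + j * τ)) = c ^ j * ψ w := by
    intro j w hw
    induction j with
    | zero => simpa using hw
    | succ j ih =>
      have h1 := hshift _ ih.1
      have h2 := hcψ _ ih.1
      simp only [Function.update_self, Function.update_idem] at h1 h2
      have e : w k + ((j + 1 : ℕ) : ℂ) * τ = w k + j * τ + τ := by push_cast; ring
      rw [e]
      refine ⟨h1, ?_⟩
      rw [h2, ih.2]; ring
  have hc1 : c ^ m₁ = 1 := by
    obtain ⟨d, rfl⟩ := hd
    rw [pow_mul, hc, one_pow]
  have hnat : ∀ (z : Fin n → ℂ) (a b : ℂ) (j : ℕ), Function.update z k b ∈ tube k r → 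
      a = b + j * (2 * Real.pi * Complex.I) → 
      ψ (Function.update z k a) = ψ (Function.update z k b) := by
    intro z a b j hb hab
    have := (hiter (j * m₁) _ hb).2
    rw [mul_comm j m₁, pow_mul, hc1, one_pow, one_mul] at this
    rw [← this]
    simp only [Function.update_self, Function.update_idem]
    congr 2
    rw [hab, hτ]; push_cast; field_simp
  have hper : ∀ z ∈ pstar k r, ∀ a b : ℂ, Complex.exp a = z k → Complex.exp b = z k → 
      ψ (Function.update z k a) = ψ (Function.update z k b) := by
    intro z hz a b ha hb
    obtain ⟨j, hj⟩ := Complex.exp_eq_exp_iff_exists_int.1 (ha.trans hb.symm)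
    obtain ⟨l, rfl | rfl⟩ := j.eq_nat_or_neg
    · exact hnat z a b l (tube_of_exp k r hr hz hb) (by simpa using hj)
    · refine (hnat z b a l (tube_of_exp k r hr hz ha) ?_).symm
      rw [hj]; push_cast; ring
  have hexp2 : ∀ z : Fin n → ℂ, z k ≠ 0 → Complex.exp (Complex.log (- z k) + Real.pi * Complex.I) = z k := by
    intro z hz
    rw [Complex.exp_add, Complex.exp_pi_mul_I, Complex.exp_log (neg_ne_zero.2 hz)]; ring
  refine ⟨fun z => ψ (Function.update z k (Complex.log (z k))), ?_, ?_⟩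
  · intro z hz
    refine ContinuousAt.continuousWithinAt ?_
    have hcase : z k ∈ Complex.slitPlane ∨ - z k ∈ Complex.slitPlane := by
      have := hz.2
      simp only [Complex.mem_slitPlane_iff, Complex.neg_re, Complex.neg_im]
      by_contra! hcon
      apply this
      apply Complex.ext <;> simp <;> linarith [hcon.1.1, hcon.2.1, hcon.1.2]
    have hψat : ∀ b, Complex.exp b = z k → ContinuousAt ψ (Function.update z k b) := fun b hb =>
      hψc.continuousAt ((tube_open k r).mem_nhds (tube_of_exp k r hr hz hb))
    rcases hcase with h | h
    · refine ContinuousAt.comp (f := fun z : Fin n → ℂ => Function.update z k (Complex.log (z k)))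
        (hψat _ (Complex.exp_log hz.2)) ?_
      exact continuousAt_id.update k ((continuous_apply k).continuousAt.clog h)
    · have h2 : ContinuousAt (fun z : Fin n → ℂ => ψ (Function.update z k 
          (Complex.log (- z k) + Real.pi * Complex.I))) z := by
        refine ContinuousAt.comp (f := fun z : Fin n → ℂ => Function.update z k 
          (Complex.log (- z k) + Real.pi * Complex.I))
          (hψat _ (hexp2 z hz.2)) ?_
        have h3 : ContinuousAt (fun z : Fin n → ℂ => - z k) z :=
          (continuous_apply k).fun_neg.continuousAt
        have h4 : ContinuousAt (fun z : Fin n → ℂ => Complex.log (- z k) + Real.pi * Complex.I) z :=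
          (h3.clog h).fun_add continuousAt_const
        exact continuousAt_id.update k h4
      refine h2.congr ?_
      filter_upwards [(pstar_open k r).mem_nhds hz] with x hx
      exact hper x hx _ _ (hexp2 x hx.2) (Complex.exp_log hx.2)
  · intro z hz
    simp only [hψ, Function.update_self, Function.update_idem, Complex.exp_log hz.2,
      Function.update_eq_self]

/-- Local lifting lemma for model branched covers of polydiscs: if `m₂ ∣ m₁` and
`f : Q₁ → Q₂` is holomorphic with `f(Q₁*) ⊆ Q₂*`, then the set of holomorphic maps
`f̃ : P₁ → P₂` with `π₂ ∘ f̃ = f ∘ π₁` has exactly `m₂` elements (maps are counted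
as functions on `P₁`, i.e. via their restrictions to `P₁`). -/
theorem local_lifting_count
    (n : ℕ) (hn : 0 < n) (r ρ : Fin n → ℝ) (hr : ∀ i, 0 < r i) (hρ : ∀ i, 0 < ρ i)
    (m₁ m₂ : ℕ) (hm₁ : 0 < m₁) (hm₂ : 0 < m₂) (hdvd : m₂ ∣ m₁)
    (P₁ P₂ Q₁ Q₂ Q₁s Q₂s : Set (Fin n → ℂ))
    (hP₁ : P₁ = {z | ∀ i, ‖z i‖ < r i})
    (hP₂ : P₂ = {z | ∀ i, ‖z i‖ < ρ i})
    (hQ₁ : Q₁ = {z | ‖z ⟨0, hn⟩‖ < r ⟨0, hn⟩ ^ m₁ ∧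
      ∀ i, i ≠ ⟨0, hn⟩ → ‖z i‖ < r i})
    (hQ₂ : Q₂ = {z | ‖z ⟨0, hn⟩‖ < ρ ⟨0, hn⟩ ^ m₂ ∧
      ∀ i, i ≠ ⟨0, hn⟩ → ‖z i‖ < ρ i})
    (hQ₁s : Q₁s = {z ∈ Q₁ | z ⟨0, hn⟩ ≠ 0})
    (hQ₂s : Q₂s = {z ∈ Q₂ | z ⟨0, hn⟩ ≠ 0})
    (π₁ π₂ : (Fin n → ℂ) → (Fin n → ℂ))
    (hπ₁ : π₁ = fun z => Function.update z ⟨0, hn⟩ (z ⟨0, hn⟩ ^ m₁))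
    (hπ₂ : π₂ = fun z => Function.update z ⟨0, hn⟩ (z ⟨0, hn⟩ ^ m₂))
    (f : (Fin n → ℂ) → (Fin n → ℂ))
    (hf : DifferentiableOn ℂ f Q₁)
    (hfQ : Set.MapsTo f Q₁ Q₂)
    (hfs : Set.MapsTo f Q₁s Q₂s) :
    Set.ncard
      ((fun g => P₁.restrict g) ''
        {g : (Fin n → ℂ) → (Fin n → ℂ) |
          DifferentiableOn ℂ g P₁ ∧ Set.MapsTo g P₁ P₂ ∧
          ∀ z ∈ P₁, π₂ (g z) = f (π₁ z)}) = m₂ := by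
  set k : Fin n := ⟨0, hn⟩ with hk
  have memP : ∀ z, z ∈ P₁ ↔ ∀ i, ‖z i‖ < r i := fun z => by rw [hP₁]; rfl
  have hPopen : IsOpen P₁ := by rw [hP₁]; exact isOpen_polydisc r
  have hπQ : MapsTo π₁ P₁ Q₁ := by
    intro z hz
    rw [memP] at hz
    rw [hQ₁, hπ₁]
    refine ⟨?_, fun i hi => ?_⟩
    · simpa using pow_lt_pow_left₀ (hz k) (norm_nonneg _) hm₁.ne'
    · simpa [Function.update_of_ne hi] using hz i
  have hQopen : IsOpen Q₁ := by
    have : Q₁ = {z | ∀ i, ‖z i‖ < Function.update r k (r k ^ m₁) i} := by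
      rw [hQ₁]
      ext z
      constructor
      · rintro ⟨h1, h2⟩ i
        by_cases h : i = k
        · rw [h, Function.update_self]; exact h1
        · rw [Function.update_of_ne h]; exact h2 i h
      · intro h
        refine ⟨by simpa using h k, fun i hi => ?_⟩
        have := h i
        rwa [Function.update_of_ne hi] at this
    rw [this]
    exact isOpen_polydisc _
  have hπd : Differentiable ℂ π₁ := by
    have h1 : Differentiable ℂ (fun z : Fin n → ℂ => (z k ^ m₁, z)) := by fun_prop
    rw [hπ₁]
    exact (differentiable_update k).comp h1
  have hfπ : ∀ z ∈ P₁, DifferentiableAt ℂ (fun z => f (π₁ z)) z := fun z hz =>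
    DifferentiableAt.comp z (hf.differentiableAt (hQopen.mem_nhds (hπQ hz))) (hπd z)
  set F : (Fin n → ℂ) → ℂ := fun z => f (π₁ z) k with hF
  have hFd : ∀ z ∈ P₁, DifferentiableAt ℂ F z := fun z hz =>
    differentiableAt_pi.1 (hfπ z hz) k
  have hsub : pstar k r ⊆ P₁ := fun z hz => (memP z).2 hz.1
  have hF0 : ∀ z ∈ pstar k r, F z ≠ 0 := by
    intro z hz
    have h1 : π₁ z ∈ Q₁s := by
      rw [hQ₁s]
      refine ⟨hπQ (hsub hz), ?_⟩
      rw [hπ₁]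
      simpa using fun h => absurd h hz.2
    have h2 := hfs h1
    rw [hQ₂s] at h2
    exact h2.2
  have hFb : ∀ z ∈ P₁, ‖F z‖ < ρ k ^ m₂ := by
    intro z hz
    have h2 := hfQ (hπQ hz)
    rw [hQ₂] at h2
    exact h2.1
  have hFb2 : ∀ z ∈ P₁, ∀ i, i ≠ k → ‖f (π₁ z) i‖ < ρ i := by
    intro z hz
    have h2 := hfQ (hπQ hz)
    rw [hQ₂] at h2
    exact h2.2
  obtain ⟨G, hGc, hG⟩ := exists_root k r hr F m₂ m₁ hm₂ hm₁ hdvd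
    (fun z hz => (hFd z (hsub hz)).continuousAt.continuousWithinAt) hF0 (by
      intro z t ht
      simp [hF, hπ₁, ht])
  have hlt : ∀ z ∈ P₁, ∀ a : ℂ, a ^ m₂ = F z → ‖a‖ < ρ k := by
    intro z hz a ha
    have := hFb z hz
    rw [← ha, norm_pow] at this
    exact lt_of_pow_lt_pow_left₀ _ (hρ k).le this
  obtain ⟨g, hgd, hgG⟩ := remov k r hr G (ρ k)
    (fun z hz hz0 => root_diff (F := F) hm₂ (hGc.continuousAt ((pstar_open k r).mem_nhds ⟨hz, hz0⟩))
      (hFd z ((memP z).2 hz)) (hF0 z ⟨hz, hz0⟩)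
      (by
        filter_upwards [(pstar_open k r).mem_nhds ⟨hz, hz0⟩] with x hx using hG x hx))
    (fun z hz hz0 => (hlt z ((memP z).2 hz) _ (hG z ⟨hz, hz0⟩)).le)
  have hPcl : P₁ ⊆ closure (pstar k r) := by rw [hP₁]; exact pstar_dense k r
  have hgdP : ∀ z ∈ P₁, DifferentiableAt ℂ g z := fun z hz => hgd z ((memP z).1 hz)
  have hgcont : ContinuousOn g P₁ := fun z hz => (hgdP z hz).continuousAt.continuousWithinAt
  have hgF : ∀ z ∈ P₁, g z ^ m₂ = F z := by
    have h1 : EqOn (fun z => g z ^ m₂) F (pstar k r) := fun z hz => by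
      simp only [hgG z hz.2, hG z hz]
    exact h1.of_subset_closure (hgcont.pow _)
      (fun z hz => (hFd z hz).continuousAt.continuousWithinAt) hsub hPcl
  have hg0 : ∀ z ∈ pstar k r, g z ≠ 0 := by
    intro z hz h
    apply hF0 z hz
    rw [← hgF z (hsub hz), h, zero_pow hm₂.ne']
  have hpne : (pstar k r).Nonempty := by
    obtain ⟨w, hw⟩ := tube_nonempty k r hr
    exact ⟨_, tube_exp k r hr hw⟩
  set Φ : ℂ → (P₁ → Fin n → ℂ) := fun c => P₁.restrict
    (fun z => Function.update (f (π₁ z)) k (c * g z)) with hΦ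
  have hset : ((fun g => P₁.restrict g) ''
        {g : (Fin n → ℂ) → (Fin n → ℂ) |
          DifferentiableOn ℂ g P₁ ∧ Set.MapsTo g P₁ P₂ ∧
          ∀ z ∈ P₁, π₂ (g z) = f (π₁ z)}) =
      Φ '' (Polynomial.nthRootsFinset m₂ (1 : ℂ) : Set ℂ) := by
    ext φ
    constructor
    · rintro ⟨h, ⟨hd, -, hh⟩, rfl⟩
      have hhk : ∀ z ∈ P₁, h z k ^ m₂ = F z := by
        intro z hz
        have := congrFun (hh z hz) k
        simpa [hπ₂] using this
      have hhc : ContinuousOn (fun z => h z k) P₁ :=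
        (continuous_apply k).comp_continuousOn hd.continuousOn
      obtain ⟨c, hc, hcg⟩ := root_const (pstar_preconn k r hr) hpne (u := fun z => h z k) (v := g)
        (hhc.mono hsub) (hgcont.mono hsub) hg0 hm₂
        (fun z hz => by rw [hhk z (hsub hz), hgF z (hsub hz)])
      have hcg2 : EqOn (fun z => h z k) (fun z => c * g z) P₁ :=
        EqOn.of_subset_closure (fun z hz => hcg z hz) hhc (continuousOn_const.mul hgcont) hsub hPcl
      refine ⟨c, ?_, ?_⟩
      · simpa [Polynomial.mem_nthRootsFinset hm₂] using hc
      · funext ⟨z, hz⟩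
        funext i
        change Function.update (f (π₁ z)) k (c * g z) i = h z i
        by_cases hi : i = k
        · rw [hi, Function.update_self]; exact (hcg2 hz).symm
        · rw [Function.update_of_ne hi, ← hh z hz, hπ₂]
          simp [Function.update_of_ne hi]
    · rintro ⟨c, hc, rfl⟩
      have hc : c ^ m₂ = 1 := by simpa [Polynomial.mem_nthRootsFinset hm₂] using hc
      have hcF : ∀ z ∈ P₁, (c * g z) ^ m₂ = F z := by
        intro z hz
        rw [mul_pow, hc, one_mul, hgF z hz]
      refine ⟨fun z => Function.update (f (π₁ z)) k (c * g z), ⟨?_, ?_, ?_⟩, rfl⟩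
      · intro z hz
        have h1 : DifferentiableAt ℂ (fun z => (c * g z, f (π₁ z))) z :=
          ((hgdP z hz).const_mul c).prodMk (hfπ z hz)
        exact (DifferentiableAt.comp z (differentiable_update k _) h1).differentiableWithinAt
      · intro z hz
        rw [hP₂]
        intro i
        change ‖Function.update (f (π₁ z)) k (c * g z) i‖ < ρ i
        by_cases hi : i = k
        · rw [hi, Function.update_self]; exact hlt z hz _ (hcF z hz)
        · rw [Function.update_of_ne hi]; exact hFb2 z hz i hi
      · intro z hz
        rw [hπ₂]
        simp only [Function.update_self, Function.update_idem, hcF z hz]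
        exact Function.update_eq_self k _
  rw [hset, Set.ncard_image_of_injective, Set.ncard_coe_finset]
  · exact (Complex.isPrimitiveRoot_exp m₂ hm₂.ne').card_nthRootsFinset
  · intro a b hab
    obtain ⟨z, hz⟩ := hpne
    have h1 := congrFun (congrFun hab ⟨z, hsub hz⟩) k
    change Function.update (f (π₁ z)) k (a * g z) k = Function.update (f (π₁ z)) k (b * g z) k at h1
    rw [Function.update_self, Function.update_self] at h1
    exact mul_right_cancel₀ (hg0 z hz) h1
end

section
/- Let m_1, m_2 be positive integers with m_2 ∣ m_1, let r > 0, and let f be a holomorphic function on the open disc {w ∈ ℂ : |w| < r^{m_1}} such that f(w) ≠ 0 for all w ≠ 0 in this disc. Then the set of holomorphic functions h on the disc {z ∈ ℂ : |z| < r} satisfying h(z)^{m_2} = f(z^{m_1}) for all |z| < r has exactly m_2 elements. -/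
open Set Filter Topology Metric in
lemma aux_factor (R : ℝ) (hR : 0 < R) (f : ℂ → ℂ) (hf : DifferentiableOn ℂ f (ball 0 R))
    (hf0 : ∀ w ∈ ball (0 : ℂ) R, w ≠ 0 → f w ≠ 0) :
    ∃ (n : ℕ) (g : ℂ → ℂ), DifferentiableOn ℂ g (ball 0 R) ∧ (∀ w ∈ ball (0 : ℂ) R, g w ≠ 0) ∧
      ∀ w ∈ ball (0 : ℂ) R, f w = w ^ n * g w := by
  have h0 : (0 : ℂ) ∈ ball (0 : ℂ) R := mem_ball_self hR
  have han : AnalyticAt ℂ f 0 := hf.analyticAt (isOpen_ball.mem_nhds h0)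
  have hne : ¬ ∀ᶠ z in 𝓝 (0 : ℂ), f z = 0 := by
    intro h
    have h1 : ∀ᶠ z in 𝓝[≠] (0 : ℂ), f z = 0 := h.filter_mono nhdsWithin_le_nhds
    have h2 : ∀ᶠ z in 𝓝[≠] (0 : ℂ), z ∈ ball (0 : ℂ) R :=
      nhdsWithin_le_nhds (isOpen_ball.mem_nhds h0)
    obtain ⟨z, hz1, hz2, hz3⟩ := (h1.and (h2.and self_mem_nhdsWithin)).exists
    exact hf0 z hz2 hz3 hz1
  obtain ⟨n, g₀, hg₀, hg₀0, hg₀e⟩ := han.exists_eventuallyEq_pow_smul_nonzero_iff.mpr hne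
  simp only [sub_zero, smul_eq_mul] at hg₀e
  set g : ℂ → ℂ := fun w => if w = 0 then g₀ 0 else f w / w ^ n with hg
  have hgne : ∀ w, w ≠ 0 → g w = f w / w ^ n := fun w hw => by simp [hg, hw]
  have hg00 : g 0 = g₀ 0 := by simp [hg]
  refine ⟨n, g, ?_, ?_, ?_⟩
  · intro w hw
    apply DifferentiableAt.differentiableWithinAt
    by_cases hw0 : w = 0
    · subst hw0
      refine hg₀.differentiableAt.congr_of_eventuallyEq ?_
      filter_upwards [hg₀e] with z hz
      by_cases hz0 : z = 0
      · rw [hz0, hg00]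
      · rw [hgne z hz0, hz, mul_div_cancel_left₀ _ (pow_ne_zero n hz0)]
    · have h1 : DifferentiableAt ℂ (fun z => f z / z ^ n) w :=
        (hf.differentiableAt (isOpen_ball.mem_nhds hw)).div (by fun_prop) (pow_ne_zero n hw0)
      refine h1.congr_of_eventuallyEq ?_
      filter_upwards [isOpen_ne.mem_nhds hw0] with z hz
      exact hgne z hz
  · intro w hw
    by_cases hw0 : w = 0
    · rw [hw0, hg00]; exact hg₀0
    · rw [hgne w hw0]; exact div_ne_zero (hf0 w hw hw0) (pow_ne_zero n hw0)
  · intro w hw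
    by_cases hw0 : w = 0
    · rw [hw0, hg00]; exact hg₀e.self_of_nhds
    · rw [hgne w hw0, mul_div_cancel₀ _ (pow_ne_zero n hw0)]

open Set Filter Topology Metric in
lemma aux_log (R : ℝ) (hR : 0 < R) (g : ℂ → ℂ) (hg : DifferentiableOn ℂ g (ball 0 R))
    (hg0 : ∀ w ∈ ball (0 : ℂ) R, g w ≠ 0) :
    ∃ L : ℂ → ℂ, DifferentiableOn ℂ L (ball 0 R) ∧
      ∀ w ∈ ball (0 : ℂ) R, Complex.exp (L w) = g w := by
  have h0 : (0 : ℂ) ∈ ball (0 : ℂ) R := mem_ball_self hR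
  have hd : DifferentiableOn ℂ (fun z => deriv g z / g z) (ball 0 R) :=
    (hg.deriv isOpen_ball).div hg hg0
  obtain ⟨L, hL0, hL⟩ := hd.isExactOn_ball.with_val_at 0 (Complex.log (g 0))
  refine ⟨L, fun w hw => (hL w hw).differentiableAt.differentiableWithinAt, ?_⟩
  have hder : ∀ w ∈ ball (0 : ℂ) R,
      HasDerivAt (fun z => g z * Complex.exp (-L z)) 0 w := by
    intro w hw
    have h1 := (hg.differentiableAt (isOpen_ball.mem_nhds hw)).hasDerivAt.mul (hL w hw).neg.cexp
    refine h1.congr_deriv ?_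
    have := hg0 w hw
    field_simp
    ring
  intro w hw
  have hc : g w * Complex.exp (-L w) = g 0 * Complex.exp (-L 0) :=
    isOpen_ball.is_const_of_deriv_eq_zero (convex_ball (0 : ℂ) R).isPreconnected
      (fun z hz => (hder z hz).differentiableAt.differentiableWithinAt)
      (fun z hz => (hder z hz).deriv) hw h0
  rw [hL0, Complex.exp_neg, Complex.exp_neg, Complex.exp_log (hg0 0 h0),
    mul_inv_cancel₀ (hg0 0 h0)] at hc
  field_simp at hc
  exact hc.symm


/-- One-variable lifting lemma: if `m₂ ∣ m₁` and `f` is holomorphic and nonvanishing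
away from `0` on the disc of radius `r ^ m₁`, then there are exactly `m₂` holomorphic
functions `h` on the disc of radius `r` with `h z ^ m₂ = f (z ^ m₁)` (functions are
counted via their restrictions to the disc). -/
theorem one_variable_lifting_count
    (m₁ m₂ : ℕ) (hm₁ : 0 < m₁) (hm₂ : 0 < m₂) (hdvd : m₂ ∣ m₁)
    (r : ℝ) (hr : 0 < r) (f : ℂ → ℂ)
    (hf : DifferentiableOn ℂ f (Metric.ball 0 (r ^ m₁)))
    (hf0 : ∀ w ∈ Metric.ball (0 : ℂ) (r ^ m₁), w ≠ 0 → f w ≠ 0) :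
    Set.ncard
      ((fun h => (Metric.ball (0 : ℂ) r).restrict h) ''
        {h : ℂ → ℂ | DifferentiableOn ℂ h (Metric.ball 0 r) ∧
          ∀ z ∈ Metric.ball (0 : ℂ) r, h z ^ m₂ = f (z ^ m₁)}) = m₂ := by
  classical
  have hR : 0 < r ^ m₁ := pow_pos hr m₁
  obtain ⟨n, g, hg, hg0, hfg⟩ := aux_factor _ hR f hf hf0
  obtain ⟨L, hL, hLg⟩ := aux_log _ hR g hg hg0
  obtain ⟨k, hk⟩ := hdvd
  have hmaps : ∀ z ∈ Metric.ball (0 : ℂ) r, z ^ m₁ ∈ Metric.ball (0 : ℂ) (r ^ m₁) := by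
    intro z hz
    rw [mem_ball_zero_iff] at hz ⊢
    rw [norm_pow]
    exact pow_lt_pow_left₀ hz (norm_nonneg _) hm₁.ne'
  have hm₂' : (m₂ : ℂ) ≠ 0 := by exact_mod_cast hm₂.ne'
  obtain ⟨h₀, hh₀⟩ : ∃ h₀ : ℂ → ℂ, h₀ = fun z => z ^ (k * n) * Complex.exp (L (z ^ m₁) / m₂) :=
    ⟨_, rfl⟩
  have hd₀ : DifferentiableOn ℂ h₀ (Metric.ball 0 r) := by
    have h1 : DifferentiableOn ℂ (fun z : ℂ => L (z ^ m₁)) (Metric.ball 0 r) :=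
      hL.comp (g := L) (f := fun z : ℂ => z ^ m₁) (by fun_prop) hmaps
    rw [hh₀]
    exact DifferentiableOn.mul (by fun_prop) (h1.div_const _).cexp
  have hp₀ : ∀ z ∈ Metric.ball (0 : ℂ) r, h₀ z ^ m₂ = f (z ^ m₁) := by
    intro z hz
    rw [hfg _ (hmaps z hz), ← hLg _ (hmaps z hz), hh₀]
    simp only [mul_pow]
    rw [← Complex.exp_nat_mul, mul_div_cancel₀ _ hm₂', ← pow_mul, ← pow_mul, hk]
    congr 2
    ring
  have hn₀ : ∀ z : ℂ, z ≠ 0 → h₀ z ≠ 0 := by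
    intro z hz
    rw [hh₀]
    exact mul_ne_zero (pow_ne_zero _ hz) (Complex.exp_ne_zero _)
  have key : ((fun h => (Metric.ball (0 : ℂ) r).restrict h) ''
        {h : ℂ → ℂ | DifferentiableOn ℂ h (Metric.ball 0 r) ∧
          ∀ z ∈ Metric.ball (0 : ℂ) r, h z ^ m₂ = f (z ^ m₁)}) =
      (fun ζ : ℂ => (Metric.ball (0 : ℂ) r).restrict (fun z => ζ * h₀ z)) ''
        (Polynomial.nthRootsFinset m₂ (1 : ℂ) : Set ℂ) := by
    apply Set.Subset.antisymm
    · rintro _ ⟨h, ⟨hd, hp⟩, rfl⟩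
      have h0 : (0 : ℂ) ∈ Metric.ball (0 : ℂ) r := Metric.mem_ball_self hr
      have hex : ∃ ζ ∈ Polynomial.nthRootsFinset m₂ (1 : ℂ),
          ∃ᶠ z in nhdsWithin (0 : ℂ) {0}ᶜ, h z = ζ * h₀ z := by
        by_contra hcon
        simp only [not_exists, not_and, Filter.not_frequently] at hcon
        have h1 := (Filter.eventually_all_finset _).mpr hcon
        have h2 : ∀ᶠ z in nhdsWithin (0 : ℂ) {0}ᶜ, z ∈ Metric.ball (0 : ℂ) r :=
          nhdsWithin_le_nhds (Metric.isOpen_ball.mem_nhds h0)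
        obtain ⟨z, hz1, hz2, hz3⟩ := (h1.and (h2.and self_mem_nhdsWithin)).exists
        have hz0 := hn₀ z hz3
        refine hz1 (h z / h₀ z) ?_ (div_mul_cancel₀ _ hz0).symm
        rw [Polynomial.mem_nthRootsFinset hm₂, div_pow, hp z hz2, ← hp₀ z hz2,
          div_self (pow_ne_zero _ hz0)]
      obtain ⟨ζ, hζ, hfr⟩ := hex
      refine ⟨ζ, hζ, ?_⟩
      have heq : Set.EqOn h (fun z => ζ * h₀ z) (Metric.ball 0 r) :=
        (hd.analyticOnNhd Metric.isOpen_ball).eqOn_of_preconnected_of_frequently_eq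
          ((hd₀.const_mul ζ).analyticOnNhd Metric.isOpen_ball)
          (convex_ball (0 : ℂ) r).isPreconnected h0 hfr
      funext z
      exact (heq z.2).symm
    · rintro _ ⟨ζ, hζ, rfl⟩
      have hζ' : ζ ^ m₂ = 1 := (Polynomial.mem_nthRootsFinset hm₂ _).mp hζ
      refine ⟨fun z => ζ * h₀ z, ⟨hd₀.const_mul ζ, fun z hz => ?_⟩, rfl⟩
      rw [mul_pow, hζ', one_mul, hp₀ z hz]
  rw [key, Set.ncard_image_of_injOn, Set.ncard_coe_finset,
    (Complex.isPrimitiveRoot_exp m₂ hm₂.ne').card_nthRootsFinset]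
  intro a _ b _ hab
  have hmem : ((r / 2 : ℝ) : ℂ) ∈ Metric.ball (0 : ℂ) r := by
    rw [mem_ball_zero_iff, Complex.norm_real, Real.norm_of_nonneg (by positivity)]
    linarith
  have h1 := congrFun hab ⟨_, hmem⟩
  have h2 : a * h₀ ((r / 2 : ℝ) : ℂ) = b * h₀ ((r / 2 : ℝ) : ℂ) := h1
  refine mul_right_cancel₀ (hn₀ _ ?_) h2
  exact_mod_cast (by positivity : (r / 2 : ℝ) ≠ 0)
end
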